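/- arXiv:1512.06183 — 5 statements merged into one kernel-verified Lean document; each statement's English description precedes it below -/
import Mathlib

section
/- Let n ≥ 3 be a natural number, let k be a natural number with 1 ≤ k and 2k ≤ n, let a > 0 be a real number, and set r = a/(2·sin(kπ/n)). Then (1 - a²/(2r²) + i·√(1 - (1 - a²/(2r²))²))^n = 1. -/
/-!
A side of length `a = 2 r sin (kπ/n)` in a circle of radius `r` subtends the central angle
`2kπ/n`, so `1 - a² / (2r²)` is the real part of the `n`-th root of unity `w = exp (2kπi/n)`.
A number on the unit circle is determined by its real part up to conjugation, and the square root
only selects the one of `w`, `conj w` with nonnegative imaginary part; both are `n`-th roots of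
unity.
-/

open ComplexConjugate

/-- The number `z(l, r)`: the rotation of a circle of radius `r` about its centre that carries one
endpoint of a chord of length `l` to the other, as a unit complex number in the closed upper half
plane. Its real part is the cosine of the central angle, by the law of cosines. Only `|l|` and `|r|`
matter; when `|l| > 2|r| > 0` no such chord exists and the real square root is `0`, and the value
at `r = 0` is `1`. -/
noncomputable def chordRotation (l r : ℝ) : ℂ :=
  ((1 - l ^ 2 / (2 * r ^ 2) : ℝ) : ℂ) +
    Complex.I * (Real.sqrt (1 - (1 - l ^ 2 / (2 * r ^ 2)) ^ 2) : ℝ)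

theorem sqrt_one_sub_re_sq_of_norm_eq_one {w : ℂ} (hw : ‖w‖ = 1) :
    √(1 - w.re ^ 2) = |w.im| := by
  rw [← one_pow 2, ← hw, Complex.sq_norm_sub_sq_re, Real.sqrt_sq_eq_abs]

theorem re_add_I_mul_sqrt_eq_self_or_conj {w : ℂ} (hw : ‖w‖ = 1) :
    (w.re + Complex.I * √(1 - w.re ^ 2) : ℂ) = w ∨
      (w.re + Complex.I * √(1 - w.re ^ 2) : ℂ) = conj w := by
  rw [sqrt_one_sub_re_sq_of_norm_eq_one hw]
  rcases abs_choice w.im with him | him <;> rw [him]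
  · exact .inl (by simp [Complex.ext_iff])
  · exact .inr (by simp [Complex.ext_iff])

theorem re_add_I_mul_sqrt_pow_eq_one {w : ℂ} {n : ℕ} (hn : n ≠ 0) (hw : w ^ n = 1) :
    (w.re + Complex.I * √(1 - w.re ^ 2) : ℂ) ^ n = 1 := by
  have norm_w : ‖w‖ = 1 := Complex.norm_eq_one_of_pow_eq_one hw hn
  rcases re_add_I_mul_sqrt_eq_self_or_conj norm_w with h | h <;> rw [h]
  · exact hw
  · rw [← map_pow, hw, map_one]

theorem one_sub_chord_sq_div_eq_cos {r : ℝ} (hr : r ≠ 0) (t : ℝ) :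
    1 - (2 * r * Real.sin t) ^ 2 / (2 * r ^ 2) = Real.cos (2 * t) := by
  rw [Real.cos_two_mul, Real.cos_sq']
  field_simp
  ring

theorem exp_two_mul_int_mul_pi_div_pow_eq_one {n : ℕ} (hn : n ≠ 0) (k : ℤ) :
    Complex.exp ((2 * (k * Real.pi / n) : ℝ) * Complex.I) ^ n = 1 := by
  rw [← Complex.exp_nat_mul, Complex.exp_eq_one_iff]
  refine ⟨k, ?_⟩
  push_cast
  field_simp

theorem chordRotation_two_mul_sin_pow_eq_one {n : ℕ} (hn : n ≠ 0) (k : ℤ) {r : ℝ} (hr : r ≠ 0) :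
    chordRotation (2 * r * Real.sin (k * Real.pi / n)) r ^ n = 1 := by
  rw [chordRotation, one_sub_chord_sq_div_eq_cos hr, ← Complex.exp_ofReal_mul_I_re]
  exact re_add_I_mul_sqrt_pow_eq_one hn (exp_two_mul_int_mul_pi_div_pow_eq_one hn k)

theorem sin_int_mul_pi_div_ne_zero {n : ℕ} (hn : n ≠ 0) {k : ℤ} (hk : ¬ (n : ℤ) ∣ k) :
    Real.sin (k * Real.pi / n) ≠ 0 := by
  rw [Real.sin_ne_zero_iff]
  intro m hm
  refine hk ⟨m, ?_⟩
  have hmn : (k : ℝ) = n * m := by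
    field_simp at hm
    linarith
  exact_mod_cast hmn

theorem regular_star_polygon_root_general {n : ℕ} (hn : n ≠ 0) {k : ℤ} (hk : ¬ (n : ℤ) ∣ k)
    {a : ℝ} (ha : a ≠ 0) {r : ℝ} (hr : r = a / (2 * Real.sin (k * Real.pi / n))) :
    chordRotation a r ^ n = 1 := by
  have sin_ne : Real.sin (k * Real.pi / n) ≠ 0 := sin_int_mul_pi_div_ne_zero hn hk
  have r_ne : r ≠ 0 := hr ▸ div_ne_zero ha (mul_ne_zero two_ne_zero sin_ne)
  have side_eq : a = 2 * r * Real.sin (k * Real.pi / n) := by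
    rw [hr]
    field_simp
  rw [side_eq]
  exact chordRotation_two_mul_sin_pow_eq_one hn k r_ne

theorem regular_star_polygon_root (n : ℕ) (hn : 3 ≤ n) (k : ℕ) (hk1 : 1 ≤ k) (hk2 : 2 * k ≤ n)
    (a : ℝ) (ha : 0 < a) (r : ℝ) (hr : r = a / (2 * Real.sin (k * Real.pi / n))) :
    (((1 - a ^ 2 / (2 * r ^ 2) : ℝ) : ℂ) +
      Complex.I * (Real.sqrt (1 - (1 - a ^ 2 / (2 * r ^ 2)) ^ 2) : ℝ)) ^ n = 1 := by
  have hk : ¬ (n : ℤ) ∣ k := mod_cast Nat.not_dvd_of_pos_of_lt hk1 (by lia)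
  exact regular_star_polygon_root_general (by lia) hk ha.ne' (by exact_mod_cast hr)
end

section
/- Let r > 0 be a real number and let α, β, γ ∈ (0, π) with α + β + γ = 2π. Set a = 2r·sin(α/2), b = 2r·sin(β/2), c = 2r·sin(γ/2) and s = (a+b+c)/2. Then (1/4)·(a·√(4r²−a²) + b·√(4r²−b²) + c·√(4r²−c²)) = √(s(s−a)(s−b)(s−c)). -/
/-!
Joining the circumcentre to the vertices cuts the triangle into three isosceles triangles, and the
one with apex angle `θ` has area `r² sin θ / 2`. Half the central angles sum to `π` (they are the
angles of the triangle), so the three areas add up to `2 r² sin (α/2) sin (β/2) sin (γ/2)`.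
By the law of cosines the radicand in Heron's formula is the square of the same quantity.
-/

open Real

theorem heron_factors_eq_sq_sub_sq {R : Type*} [CommRing R] (a b c : R) :
    (a + b + c) * (-a + b + c) * (a - b + c) * (a + b - c) =
      (2 * a * b) ^ 2 - (a ^ 2 + b ^ 2 - c ^ 2) ^ 2 := by
  ring

theorem heron_radicand_eq_sq_of_law_cos {a b c s C : ℝ} (hs : s = (a + b + c) / 2)
    (law_cos : c ^ 2 = a ^ 2 + b ^ 2 - 2 * a * b * cos C) :
    s * (s - a) * (s - b) * (s - c) = (a * b * sin C / 2) ^ 2 :=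
  calc s * (s - a) * (s - b) * (s - c)
      = (a + b + c) * (-a + b + c) * (a - b + c) * (a + b - c) / 16 := by rw [hs]; ring
    _ = ((2 * a * b) ^ 2 - (a ^ 2 + b ^ 2 - c ^ 2) ^ 2) / 16 := by
        rw [heron_factors_eq_sq_sub_sq]
    _ = (a * b) ^ 2 * (1 - cos C ^ 2) / 4 := by rw [law_cos]; ring
    _ = (a * b * sin C / 2) ^ 2 := by rw [← sin_sq]; ring

section AngleSum

variable {A B C : ℝ}

theorem sin_eq_of_add_add_eq_pi (h : A + B + C = π) :
    sin C = sin A * cos B + cos A * sin B := by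
  rw [eq_sub_of_add_eq' h, sin_pi_sub, sin_add]

theorem cos_eq_of_add_add_eq_pi (h : A + B + C = π) :
    cos C = sin A * sin B - cos A * cos B := by
  rw [eq_sub_of_add_eq' h, cos_pi_sub, cos_add, neg_sub]

theorem sin_sq_eq_of_add_add_eq_pi (h : A + B + C = π) :
    sin C ^ 2 = sin A ^ 2 + sin B ^ 2 - 2 * sin A * sin B * cos C := by
  rw [sin_eq_of_add_add_eq_pi h, cos_eq_of_add_add_eq_pi h]
  linear_combination sin A ^ 2 * sin_sq_add_cos_sq B + sin B ^ 2 * sin_sq_add_cos_sq A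

theorem sin_two_mul_add_add_of_add_add_eq_pi (h : A + B + C = π) :
    sin (2 * A) + sin (2 * B) + sin (2 * C) = 4 * sin A * sin B * sin C := by
  simp only [sin_two_mul]
  rw [sin_eq_of_add_add_eq_pi h, cos_eq_of_add_add_eq_pi h]
  linear_combination -2 * sin A * cos A * sin_sq_add_cos_sq B -
    2 * sin B * cos B * sin_sq_add_cos_sq A

theorem chord_sq_eq_of_add_add_eq_pi (r : ℝ) (h : A + B + C = π) :
    (2 * r * sin C) ^ 2 = (2 * r * sin A) ^ 2 + (2 * r * sin B) ^ 2 -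
      2 * (2 * r * sin A) * (2 * r * sin B) * cos C := by
  linear_combination 4 * r ^ 2 * sin_sq_eq_of_add_add_eq_pi h

end AngleSum

theorem sqrt_four_mul_sq_sub_chord_sq {r φ : ℝ} (h : 0 ≤ r * cos φ) :
    √(4 * r ^ 2 - (2 * r * sin φ) ^ 2) = 2 * r * cos φ := by
  have pythagoras : 4 * r ^ 2 - (2 * r * sin φ) ^ 2 = (2 * r * cos φ) ^ 2 := by
    linear_combination -4 * r ^ 2 * sin_sq_add_cos_sq φ
  rw [pythagoras, sqrt_sq (by linarith)]

theorem chord_mul_sqrt_eq {r φ : ℝ} (h : 0 ≤ r * cos φ) :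
    2 * r * sin φ * √(4 * r ^ 2 - (2 * r * sin φ) ^ 2) =
      2 * r ^ 2 * sin (2 * φ) := by
  rw [sqrt_four_mul_sq_sub_chord_sq h, sin_two_mul]
  ring

theorem triangle_area_eq_heron (r : ℝ) (hr : 0 < r) (α β γ : ℝ)
    (hα : α ∈ Set.Ioo 0 Real.pi) (hβ : β ∈ Set.Ioo 0 Real.pi)
    (hγ : γ ∈ Set.Ioo 0 Real.pi) (hsum : α + β + γ = 2 * Real.pi)
    (a b c s : ℝ) (ha : a = 2 * r * Real.sin (α / 2)) (hb : b = 2 * r * Real.sin (β / 2))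
    (hc : c = 2 * r * Real.sin (γ / 2)) (hs : s = (a + b + c) / 2) :
    (1 / 4) * (a * Real.sqrt (4 * r ^ 2 - a ^ 2) + b * Real.sqrt (4 * r ^ 2 - b ^ 2) +
        c * Real.sqrt (4 * r ^ 2 - c ^ 2)) =
      Real.sqrt (s * (s - a) * (s - b) * (s - c)) := by
  have half_sum : α / 2 + β / 2 + γ / 2 = π := by linarith
  have half_sin_nonneg {θ : ℝ} (hθ : θ ∈ Set.Ioo 0 π) : 0 ≤ sin (θ / 2) :=
    sin_nonneg_of_nonneg_of_le_pi (by linarith [hθ.1]) (by linarith [hθ.1, hθ.2])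
  have apothem_nonneg {θ : ℝ} (hθ : θ ∈ Set.Ioo 0 π) : 0 ≤ r * cos (θ / 2) :=
    mul_nonneg hr.le (cos_nonneg_of_mem_Icc ⟨by linarith [hθ.1, pi_pos], by linarith [hθ.2]⟩)
  have law_cos : c ^ 2 = a ^ 2 + b ^ 2 - 2 * a * b * cos (γ / 2) := by
    rw [ha, hb, hc, chord_sq_eq_of_add_add_eq_pi r half_sum]
  have area_nonneg : 0 ≤ a * b * sin (γ / 2) / 2 := by
    have := half_sin_nonneg hα
    have := half_sin_nonneg hβ
    have := half_sin_nonneg hγ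
    rw [ha, hb]
    positivity
  rw [heron_radicand_eq_sq_of_law_cos hs law_cos, sqrt_sq area_nonneg, ha, hb, hc,
    chord_mul_sqrt_eq (apothem_nonneg hα), chord_mul_sqrt_eq (apothem_nonneg hβ),
    chord_mul_sqrt_eq (apothem_nonneg hγ)]
  linear_combination r ^ 2 / 2 * sin_two_mul_add_add_of_add_add_eq_pi half_sum
end

section
/- Let r > 0 be a real number and let α, β, γ, δ ∈ (0, 2π) with α + β + γ + δ = 2π. Set a = 2r·sin(α/2), b = 2r·sin(β/2), c = 2r·sin(γ/2), d = 2r·sin(δ/2) and s = (a+b+c+d)/2. Then 16·r²·(s−a)(s−b)(s−c)(s−d) = (ab+cd)(ac+bd)(ad+bc). -/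
/-!
Let `x, y, z, w` be the half-angles, so that `x + y + z + w = π`. Both sides factor into sines.
Up to a factor `r`, each `s - a` is a sum of three half-angle sines minus the fourth, which equals
`4 sin ((y + z) / 2) sin ((z + w) / 2) sin ((w + y) / 2)`. In the product of the four such terms
each of the six pairs occurs twice, and complementary pairs combine by the double-angle formula
into `4 (sin (x + y) sin (x + z) sin (y + z))²`. By Ptolemy's identity each factor `ab + cd` is
`4r²` times a product of two of these same three sines.
-/

section

open Complex
open scoped Real

theorem sin_add_sin_add_sin_sub_sin_add (x y z : ℂ) :
    sin x + sin y + sin z - sin (x + y + z) =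
      4 * sin ((x + y) / 2) * sin ((y + z) / 2) * sin ((z + x) / 2) := by
  have sum_xy : sin x + sin y = 2 * sin ((x + y) / 2) * cos ((x - y) / 2) := sin_add_sin x y
  have diff_z : sin (x + y + z) - sin z =
      2 * sin ((x + y) / 2) * cos ((x + y + 2 * z) / 2) := by
    rw [sin_sub_sin]
    ring_nf
  have diff_cos : cos ((x - y) / 2) - cos ((x + y + 2 * z) / 2) =
      2 * sin ((y + z) / 2) * sin ((z + x) / 2) := by
    rw [cos_sub_cos, show ((x - y) / 2 + (x + y + 2 * z) / 2) / 2 = (z + x) / 2 by ring,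
      show ((x - y) / 2 - (x + y + 2 * z) / 2) / 2 = -((y + z) / 2) by ring, sin_neg]
    ring
  linear_combination sum_xy - diff_z + 2 * sin ((x + y) / 2) * diff_cos

theorem sin_mul_sin_add_sin_mul_sin_add (x y z : ℂ) :
    sin x * sin y + sin z * sin (x + y + z) = sin (x + z) * sin (y + z) := by
  simp only [sin_add, cos_add]
  linear_combination (-(sin x * sin y)) * sin_sq_add_cos_sq z

theorem two_mul_sin_half_mul_sin_half_of_add_eq_pi {x y : ℂ} (h : x + y = π) :
    2 * sin (x / 2) * sin (y / 2) = sin x := by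
  rw [show y / 2 = π / 2 - x / 2 by linear_combination h / 2, sin_pi_div_two_sub, ← sin_two_mul,
    mul_div_cancel₀ x two_ne_zero]

variable {x y z w : ℂ}

theorem sin_add_add_of_add_eq_pi (h : x + y + z + w = π) : sin (x + y + z) = sin w := by
  rw [eq_sub_of_add_eq h, sin_pi_sub]

theorem sin_add_sin_add_sin_sub_sin_of_add_eq_pi (h : x + y + z + w = π) :
    sin x + sin y + sin z - sin w =
      4 * sin ((x + y) / 2) * sin ((y + z) / 2) * sin ((z + x) / 2) := by
  rw [← sin_add_add_of_add_eq_pi h, sin_add_sin_add_sin_sub_sin_add]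

theorem sin_mul_sin_add_sin_mul_sin_of_add_eq_pi (h : x + y + z + w = π) :
    sin x * sin y + sin z * sin w = sin (x + z) * sin (y + z) := by
  rw [← sin_add_add_of_add_eq_pi h, sin_mul_sin_add_sin_mul_sin_add]

theorem prod_sum_sin_sub_sin_of_add_eq_pi (h : x + y + z + w = π) :
    (sin y + sin z + sin w - sin x) * (sin z + sin w + sin x - sin y) *
        (sin w + sin x + sin y - sin z) * (sin x + sin y + sin z - sin w) =
      4 * (sin (x + y) * sin (x + z) * sin (y + z)) ^ 2 := by
  have pair_xy : 2 * sin ((x + y) / 2) * sin ((z + w) / 2) = sin (x + y) :=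
    two_mul_sin_half_mul_sin_half_of_add_eq_pi (by linear_combination h)
  have pair_xz : 2 * sin ((z + x) / 2) * sin ((w + y) / 2) = sin (x + z) := by
    rw [add_comm x z]
    exact two_mul_sin_half_mul_sin_half_of_add_eq_pi (by linear_combination h)
  have pair_yz : 2 * sin ((y + z) / 2) * sin ((w + x) / 2) = sin (y + z) :=
    two_mul_sin_half_mul_sin_half_of_add_eq_pi (by linear_combination h)
  rw [sin_add_sin_add_sin_sub_sin_of_add_eq_pi (w := x) (by linear_combination h),
    sin_add_sin_add_sin_sub_sin_of_add_eq_pi (w := y) (by linear_combination h),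
    sin_add_sin_add_sin_sub_sin_of_add_eq_pi (w := z) (by linear_combination h),
    sin_add_sin_add_sin_sub_sin_of_add_eq_pi h, ← pair_xy, ← pair_xz, ← pair_yz,
    add_comm x z, add_comm y w]
  ring

theorem cyclic_quadrilateral_circumradius_identity_general (r α β γ δ : ℂ)
    (hsum : α + β + γ + δ = 2 * π)
    (a b c d s : ℂ) (ha : a = 2 * r * sin (α / 2)) (hb : b = 2 * r * sin (β / 2))
    (hc : c = 2 * r * sin (γ / 2)) (hd : d = 2 * r * sin (δ / 2))
    (hs : s = (a + b + c + d) / 2) :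
    16 * r ^ 2 * ((s - a) * (s - b) * (s - c) * (s - d)) =
      (a * b + c * d) * (a * c + b * d) * (a * d + b * c) := by
  subst hs ha hb hc hd
  have half_sum : α / 2 + β / 2 + γ / 2 + δ / 2 = π := by linear_combination hsum / 2
  generalize α / 2 = x, β / 2 = y, γ / 2 = z, δ / 2 = w at half_sum ⊢
  have ptolemy_xy : sin x * sin y + sin z * sin w = sin (x + z) * sin (y + z) :=
    sin_mul_sin_add_sin_mul_sin_of_add_eq_pi half_sum
  have ptolemy_xz : sin x * sin z + sin y * sin w = sin (x + y) * sin (y + z) := by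
    rw [add_comm y z]
    exact sin_mul_sin_add_sin_mul_sin_of_add_eq_pi (by linear_combination half_sum)
  have ptolemy_yz : sin y * sin z + sin x * sin w = sin (x + y) * sin (x + z) := by
    rw [add_comm x y, add_comm x z]
    exact sin_mul_sin_add_sin_mul_sin_of_add_eq_pi (by linear_combination half_sum)
  calc
    _ = 16 * r ^ 6 * ((sin y + sin z + sin w - sin x) * (sin z + sin w + sin x - sin y) *
          (sin w + sin x + sin y - sin z) * (sin x + sin y + sin z - sin w)) := by ring
    _ = 64 * r ^ 6 * ((sin (x + z) * sin (y + z)) * (sin (x + y) * sin (y + z)) *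
          (sin (x + y) * sin (x + z))) := by
      rw [prod_sum_sin_sub_sin_of_add_eq_pi half_sum]
      ring
    _ = _ := by
      rw [← ptolemy_xy, ← ptolemy_xz, ← ptolemy_yz]
      ring

end

theorem cyclic_quadrilateral_circumradius_identity (r : ℝ) (hr : 0 < r) (α β γ δ : ℝ)
    (hα : α ∈ Set.Ioo 0 (2 * Real.pi)) (hβ : β ∈ Set.Ioo 0 (2 * Real.pi))
    (hγ : γ ∈ Set.Ioo 0 (2 * Real.pi)) (hδ : δ ∈ Set.Ioo 0 (2 * Real.pi))
    (hsum : α + β + γ + δ = 2 * Real.pi)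
    (a b c d s : ℝ) (ha : a = 2 * r * Real.sin (α / 2)) (hb : b = 2 * r * Real.sin (β / 2))
    (hc : c = 2 * r * Real.sin (γ / 2)) (hd : d = 2 * r * Real.sin (δ / 2))
    (hs : s = (a + b + c + d) / 2) :
    16 * r ^ 2 * ((s - a) * (s - b) * (s - c) * (s - d)) =
      (a * b + c * d) * (a * c + b * d) * (a * d + b * c) := by
  exact_mod_cast cyclic_quadrilateral_circumradius_identity_general r α β γ δ (mod_cast hsum)
    a b c d s (mod_cast ha) (mod_cast hb) (mod_cast hc) (mod_cast hd) (mod_cast hs)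
end

section
/- Let n ≥ 3, let l₁, …, lₙ > 0 be real numbers, and suppose there exists an index i with 1 ≤ i ≤ n−1 and lᵢ ≥ lₙ. Then there is no real number r with 2r > lₖ for all k satisfying 1/√(4(r/lₙ)² − 1) = ∑_{k=1}^{n−1} 1/√(4(r/lₖ)² − 1). -/
/-!
A chord of length `l` in a circle of radius `r` subtends a central angle `2θ` with
`sin θ = l / (2r)`, and `1 / √(4(r/l)² - 1)` is then `tan θ`. Since `θ` increases with `l` and `tan`
increases on `[0, π/2)`, a single chord at least as long as the last side already contributes at
least its tangent to the sum; any other chord contributes something positive, so the sum is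
strictly too large.
-/

open Finset Real

/-- Half of the central angle subtended by a chord of length `l` in a circle of radius `r`.
The value is meaningful for `0 ≤ l ≤ 2 * r`; for longer chords `arcsin` truncates it to `π / 2`. -/
noncomputable def chordHalfAngle (r l : ℝ) : ℝ :=
  arcsin (l / (2 * r))

lemma chordHalfAngle_pos {r l : ℝ} (hr : 0 < r) (hl : 0 < l) : 0 < chordHalfAngle r l :=
  arcsin_pos.2 (by positivity)

lemma chordHalfAngle_lt_pi_div_two {r l : ℝ} (hr : 0 < r) (hlr : l < 2 * r) :
    chordHalfAngle r l < π / 2 :=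
  arcsin_lt_pi_div_two.2 ((div_lt_one (by positivity)).2 hlr)

lemma chordHalfAngle_monotone {r : ℝ} (hr : 0 ≤ r) : Monotone (chordHalfAngle r) :=
  fun _ _ hlm ↦ monotone_arcsin (by gcongr)

lemma tan_chordHalfAngle {r l : ℝ} (hr : 0 < r) (hl : 0 < l) :
    tan (chordHalfAngle r l) = 1 / √(4 * (r / l) ^ 2 - 1) := by
  have hsin : 0 ≤ l / (2 * r) := by positivity
  have hcot_sq : 4 * (r / l) ^ 2 - 1 = (1 - (l / (2 * r)) ^ 2) / (l / (2 * r)) ^ 2 := by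
    field_simp
    ring
  rw [chordHalfAngle, tan_arcsin, hcot_sq, sqrt_div' _ (sq_nonneg _), sqrt_sq hsin, one_div_div]

lemma tan_chordHalfAngle_pos {r l : ℝ} (hl : 0 < l) (hlr : l < 2 * r) :
    0 < tan (chordHalfAngle r l) :=
  have hr : 0 < r := by linarith
  tan_pos_of_pos_of_lt_pi_div_two (chordHalfAngle_pos hr hl) (chordHalfAngle_lt_pi_div_two hr hlr)

lemma tan_chordHalfAngle_le_tan_chordHalfAngle {r l m : ℝ} (hl : 0 < l) (hlm : l ≤ m)
    (hmr : m < 2 * r) : tan (chordHalfAngle r l) ≤ tan (chordHalfAngle r m) := by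
  have hr : 0 < r := by linarith
  have hmem {x : ℝ} (hx : 0 < x) (hxr : x < 2 * r) :
      chordHalfAngle r x ∈ Set.Ioo (-(π / 2)) (π / 2) :=
    ⟨by linarith [pi_pos, chordHalfAngle_pos hr hx], chordHalfAngle_lt_pi_div_two hr hxr⟩
  exact strictMonoOn_tan.monotoneOn (hmem hl (hlm.trans_lt hmr)) (hmem (hl.trans_le hlm) hmr)
    (chordHalfAngle_monotone hr.le hlm)

lemma tan_chordHalfAngle_lt_sum {ι : Type*} {s : Finset ι} {l : ι → ℝ} {r m : ℝ} {i : ι}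
    (hs : s.Nontrivial) (hl : ∀ k ∈ s, 0 < l k) (hlr : ∀ k ∈ s, l k < 2 * r) (hi : i ∈ s)
    (hm : 0 < m) (hmi : m ≤ l i) :
    tan (chordHalfAngle r m) < ∑ k ∈ s, tan (chordHalfAngle r (l k)) := by
  have hpos : ∀ k ∈ s, 0 < tan (chordHalfAngle r (l k)) :=
    fun k hk ↦ tan_chordHalfAngle_pos (hl k hk) (hlr k hk)
  obtain ⟨j, hj, hji⟩ := hs.exists_ne i
  calc tan (chordHalfAngle r m)
      ≤ tan (chordHalfAngle r (l i)) :=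
        tan_chordHalfAngle_le_tan_chordHalfAngle hm hmi (hlr i hi)
    _ < ∑ k ∈ s, tan (chordHalfAngle r (l k)) :=
        single_lt_sum hji hi hj (hpos j hj) fun k hk _ ↦ (hpos k hk).le

theorem two_long_sides_imp_pci (n : ℕ) (hn : 3 ≤ n) (l : ℕ → ℝ)
    (hl : ∀ k ∈ Finset.Icc 1 n, 0 < l k)
    (hi : ∃ i ∈ Finset.Icc 1 (n - 1), l n ≤ l i) :
    ¬ ∃ r : ℝ, (∀ k ∈ Finset.Icc 1 n, l k < 2 * r) ∧
      1 / Real.sqrt (4 * (r / l n) ^ 2 - 1) =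
        ∑ k ∈ Finset.Icc 1 (n - 1), 1 / Real.sqrt (4 * (r / l k) ^ 2 - 1) := by
  rintro ⟨r, hlr, heq⟩
  obtain ⟨i, hi, hni⟩ := hi
  have hsub : Icc 1 (n - 1) ⊆ Icc 1 n := Icc_subset_Icc_right (n.sub_le 1)
  have hmem : n ∈ Icc 1 n := right_mem_Icc.2 (by lia)
  have hnontrivial : (Icc 1 (n - 1)).Nontrivial :=
    one_lt_card_iff_nontrivial.1 (by rw [Nat.card_Icc]; lia)
  have hr : 0 < r := by linarith [hl n hmem, hlr n hmem]
  have htan : ∀ k ∈ Icc 1 n, tan (chordHalfAngle r (l k)) = 1 / √(4 * (r / l k) ^ 2 - 1) :=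
    fun k hk ↦ tan_chordHalfAngle hr (hl k hk)
  rw [← htan n hmem, ← sum_congr rfl fun k hk ↦ htan k (hsub hk)] at heq
  exact (tan_chordHalfAngle_lt_sum hnontrivial (fun k hk ↦ hl k (hsub hk))
    (fun k hk ↦ hlr k (hsub hk)) hi (hl n hmem) hni).ne heq
end

section
/- Let a > 0 be a real number and let k ∈ {1, 2, 3}. Then r = a/(2·sin(kπ/7)) satisfies a⁶ − 7a⁴r² + 14a²r⁴ − 7r⁶ = 0. -/
/-!
A side of a polygon inscribed in a circle of radius `r` that subtends the inscribed angle `x` has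
length `a = 2 r sin x`. Since `sin (7 x) / sin x` is a sextic in the ratio `a / r = 2 sin x`, which
vanishes at `x = k π / 7`, multiplying by `r ^ 6` gives a homogeneous relation between `a` and `r`.
-/

open Real

theorem cos_three_mul_eq_cos_mul (x : ℝ) : cos (3 * x) = cos x * (1 - 4 * sin x ^ 2) := by
  rw [cos_three_mul]
  linear_combination 4 * cos x * cos_sq' x

theorem sin_four_mul (x : ℝ) : sin (4 * x) = 4 * sin x * cos x * (1 - 2 * sin x ^ 2) := by
  rw [show 4 * x = 2 * (2 * x) by ring, sin_two_mul, sin_two_mul, cos_two_mul_eq_one_sub]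
  ring

theorem cos_four_mul (x : ℝ) : cos (4 * x) = 1 - 8 * sin x ^ 2 + 8 * sin x ^ 4 := by
  rw [show 4 * x = 2 * (2 * x) by ring, cos_two_mul, cos_two_mul_eq_one_sub]
  ring

theorem sin_seven_mul (x : ℝ) :
    sin (7 * x) = 7 * sin x - 56 * sin x ^ 3 + 112 * sin x ^ 5 - 64 * sin x ^ 7 := by
  rw [show 7 * x = 3 * x + 4 * x by ring, sin_add, sin_three_mul, cos_three_mul_eq_cos_mul,
    sin_four_mul, cos_four_mul]
  linear_combination 4 * sin x * (1 - 2 * sin x ^ 2) * (1 - 4 * sin x ^ 2) * cos_sq' x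

theorem two_mul_sin_sextic_eq_zero {x : ℝ} (hsin : sin x ≠ 0) (hsin_seven : sin (7 * x) = 0) :
    (2 * sin x) ^ 6 - 7 * (2 * sin x) ^ 4 + 14 * (2 * sin x) ^ 2 - 7 = 0 := by
  refine (mul_eq_zero.mp ?_).resolve_left hsin
  rw [sin_seven_mul] at hsin_seven
  linear_combination -hsin_seven

theorem sin_int_mul_pi_div_eq_zero_iff {n : ℤ} (hn : n ≠ 0) (k : ℤ) :
    sin (k * π / n) = 0 ↔ n ∣ k := by
  have hn' : (n : ℝ) ≠ 0 := Int.cast_ne_zero.mpr hn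
  have mul_pi_eq_iff (m : ℤ) : m * π = k * π / n ↔ k = n * m := by
    rw [mul_div_right_comm, mul_left_inj' pi_ne_zero, eq_div_iff hn', eq_comm, mul_comm (m : ℝ)]
    norm_cast
  simp only [sin_eq_zero_iff, mul_pi_eq_iff, Dvd.dvd]

theorem heptagon_circumradius_polynomial_general (a : ℝ) (k : ℤ) (hk : ¬ 7 ∣ k) (r : ℝ)
    (hr : r = a / (2 * sin (k * π / 7))) :
    a ^ 6 - 7 * a ^ 4 * r ^ 2 + 14 * a ^ 2 * r ^ 4 - 7 * r ^ 6 = 0 := by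
  have hsin : sin (k * π / 7) ≠ 0 := by
    exact_mod_cast (sin_int_mul_pi_div_eq_zero_iff (by norm_num : (7 : ℤ) ≠ 0) k).not.mpr hk
  have hsin_seven : sin (7 * (k * π / 7)) = 0 := by
    rw [mul_div_cancel₀ _ (by norm_num), sin_int_mul_pi]
  have side_eq : a = 2 * sin (k * π / 7) * r := by
    rw [hr, mul_div_cancel₀ _ (mul_ne_zero two_ne_zero hsin)]
  rw [side_eq]
  linear_combination r ^ 6 * two_mul_sin_sextic_eq_zero hsin hsin_seven

theorem heptagon_circumradius_polynomial (a : ℝ) (ha : 0 < a) (k : ℕ)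
    (hk : k ∈ ({1, 2, 3} : Set ℕ)) (r : ℝ) (hr : r = a / (2 * Real.sin (k * Real.pi / 7))) :
    a ^ 6 - 7 * a ^ 4 * r ^ 2 + 14 * a ^ 2 * r ^ 4 - 7 * r ^ 6 = 0 := by
  have not_seven_dvd : ¬ (7 : ℤ) ∣ k := by rcases hk with rfl | rfl | rfl <;> norm_num
  exact heptagon_circumradius_polynomial_general a k not_seven_dvd r (by exact_mod_cast hr)
end
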